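/- For every i ∈ {1,…,d} and every h ∈ {0,…,i−1}, one has (Σ_{j=0}^h E_i* A_j E_i*)² = (Σ_{j=0}^h k_j)(Σ_{j=0}^h E_i* A_j E_i*). -/

import Mathlib

open Finset Matrix

/-- Vertex set of the wreath product `K_{n 0} ≀ K_{n 1} ≀ ⋯ ≀ K_{n (d-1)}`
(paper indices `n_1, …, n_d` correspond to `n 0, …, n (d-1)`). -/
abbrev Vx (d : ℕ) (n : ℕ → ℕ) : Type := (i : Fin d) → Fin (n i)

/-- `delta x y = 0` if `x = y`; otherwise `delta x y` is the largest (1-based)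
index at which `x` and `y` differ. -/
def delta {d : ℕ} {n : ℕ → ℕ} (x y : Vx d n) : ℕ :=
  (Finset.univ.filter fun i => x i ≠ y i).sup fun i => (i : ℕ) + 1

/-- The `i`-th adjacency matrix of the wreath product: `(A i) x y = 1` iff `delta x y = i`. -/
noncomputable def A (d : ℕ) (n : ℕ → ℕ) (i : ℕ) : Matrix (Vx d n) (Vx d n) ℂ :=
  Matrix.of fun x y => if delta x y = i then 1 else 0

/-- The valencies: `k 0 = 1` and, for `1 ≤ i`, `k i = n_1 ⋯ n_{i-1} (n_i - 1)`,
i.e. `k i = n 0 ⋯ n (i-2) * (n (i-1) - 1)`. -/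
def k (n : ℕ → ℕ) (i : ℕ) : ℕ :=
  if i = 0 then 1 else (∏ j ∈ Finset.range (i - 1), n j) * (n (i - 1) - 1)

/-- The dual idempotent `E_i*` with respect to the base point `x₀`: the diagonal
0-1 matrix with `(E_i*)_{yy} = 1` iff `delta x₀ y = i`. -/
noncomputable def Es {d : ℕ} {n : ℕ → ℕ} (x₀ : Vx d n) (i : ℕ) :
    Matrix (Vx d n) (Vx d n) ℂ :=
  Matrix.of fun y z => if y = z ∧ delta x₀ y = i then 1 else 0

/-- The all-ones matrix `J`. -/
noncomputable def Jm (d : ℕ) (n : ℕ → ℕ) : Matrix (Vx d n) (Vx d n) ℂ :=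
  Matrix.of fun _ _ => 1

/-- The matrices `G i j`. -/
noncomputable def G {d : ℕ} {n : ℕ → ℕ} (x₀ : Vx d n) (i j : ℕ) :
    Matrix (Vx d n) (Vx d n) ℂ :=
  if i < j then ((k n j : ℂ))⁻¹ • (Es x₀ i * A d n j * Es x₀ j)
  else if j < i then ((k n j : ℂ))⁻¹ • (Es x₀ i * A d n i * Es x₀ j)
  else ((k n i : ℂ))⁻¹ • (Es x₀ i * Jm d n * Es x₀ i)

/-- The span `U` of the matrices `G i j`, `i, j ∈ [d]`. -/
noncomputable def Uspan {d : ℕ} {n : ℕ → ℕ} (x₀ : Vx d n) :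
    Submodule ℂ (Matrix (Vx d n) (Vx d n) ℂ) :=
  Submodule.span ℂ (Set.range fun p : Fin (d + 1) × Fin (d + 1) => G x₀ p.1 p.2)

/-- The Terwilliger algebra of the wreath product with respect to `x₀`. -/
noncomputable def Ter {d : ℕ} {n : ℕ → ℕ} (x₀ : Vx d n) :
    Subalgebra ℂ (Matrix (Vx d n) (Vx d n) ℂ) :=
  Algebra.adjoin ℂ
    ((Set.range fun i : Fin (d + 1) => A d n i) ∪ (Set.range fun i : Fin (d + 1) => Es x₀ i))

/-- The matrices `F i h`, for `1 ≤ i ≤ d` and `0 ≤ h ≤ i - 1`. -/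
noncomputable def F {d : ℕ} {n : ℕ → ℕ} (x₀ : Vx d n) (i h : ℕ) :
    Matrix (Vx d n) (Vx d n) ℂ :=
  if h < i - 1 then
    (∑ j ∈ Finset.range (h + 1), (k n j : ℂ))⁻¹ •
        (∑ j ∈ Finset.range (h + 1), Es x₀ i * A d n j * Es x₀ i)
      - (∑ j ∈ Finset.range (h + 2), (k n j : ℂ))⁻¹ •
          (∑ j ∈ Finset.range (h + 2), Es x₀ i * A d n j * Es x₀ i)
  else
    (∑ j ∈ Finset.range i, (k n j : ℂ))⁻¹ •
        (∑ j ∈ Finset.range i, Es x₀ i * A d n j * Es x₀ i)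
      - G x₀ i i

/-!
The function `delta` is an ultrametric, so `delta x y ≤ h` is an equivalence relation. Its classes
are the balls of radius `h`, all of the same size `k 0 + ⋯ + k h`, hence its indicator matrix
`B = A 0 + ⋯ + A h` satisfies `B ^ 2 = (k 0 + ⋯ + k h) • B`. For `h < i` a ball of radius `h` is
contained in the sphere of radius `i` about `x₀` or disjoint from it, so the idempotent `Es x₀ i`
commutes with `B`, and the quadratic relation passes to the corner `Es x₀ i * B * Es x₀ i`.
-/

theorem corner_mul_self {R S : Type*} [Semigroup S] [SMul R S]
    [IsScalarTower R S S] [SMulCommClass R S S] {e b : S} {c : R} (he : IsIdempotentElem e)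
    (heb : Commute e b) (hb : b * b = c • b) :
    e * b * e * (e * b * e) = c • (e * b * e) :=
  calc e * b * e * (e * b * e)
      = e * b * (e * e) * b * e := by simp only [mul_assoc]
    _ = e * (b * e) * b * e := by rw [he.eq, mul_assoc e b e]
    _ = e * e * (b * b) * e := by rw [← heb.eq]; simp only [mul_assoc]
    _ = c • (e * b * e) := by rw [he.eq, hb, mul_smul_comm, smul_mul_assoc]

theorem of_ite_mul_self_of_equivalence {X R : Type*} [Fintype X] [NonAssocSemiring R]
    {r : X → X → Prop} [DecidableRel r] (hr : Equivalence r) {c : ℕ}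
    (hc : ∀ x, #{y | r x y} = c) :
    (of fun x y => if r x y then (1 : R) else 0) * (of fun x y => if r x y then (1 : R) else 0) =
      (c : R) • of fun x y => if r x y then (1 : R) else 0 := by
  ext x z
  have hterm (y : X) : (if r x y then (1 : R) else 0) * (if r y z then 1 else 0) =
      (if r x y then 1 else 0) * (if r x z then 1 else 0) := by
    by_cases hxy : r x y
    · have hiff : r y z ↔ r x z := ⟨hr.trans hxy, hr.trans (hr.symm hxy)⟩
      simp only [hiff]
    · simp only [hxy, if_false, zero_mul]
  simp only [mul_apply, Matrix.smul_apply, of_apply, smul_eq_mul, hterm,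
    ← Finset.sum_mul, sum_boole, hc]

section WreathProduct

variable {d : ℕ} {n : ℕ → ℕ}

theorem delta_le_iff {x y : Vx d n} {h : ℕ} :
    delta x y ≤ h ↔ ∀ i : Fin d, h ≤ i → x i = y i := by
  simp only [delta, Finset.sup_le_iff, mem_filter, mem_univ, true_and, Nat.add_one_le_iff]
  exact forall_congr' fun i => by rw [← not_le, not_imp_not]

theorem delta_comm (x y : Vx d n) : delta x y = delta y x := by
  simp only [delta, ne_comm]

theorem delta_le_trans {x y z : Vx d n} {h : ℕ} (hxy : delta x y ≤ h) (hyz : delta y z ≤ h) :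
    delta x z ≤ h :=
  delta_le_iff.2 fun i hi => (delta_le_iff.1 hxy i hi).trans (delta_le_iff.1 hyz i hi)

theorem equivalence_delta_le (h : ℕ) : Equivalence fun x y : Vx d n => delta x y ≤ h where
  refl _ := delta_le_iff.2 fun _ _ => rfl
  symm hxy := (delta_comm _ _).trans_le hxy
  trans := delta_le_trans

theorem delta_eq_of_delta_lt {x y z : Vx d n} (hyz : delta y z < delta x y) :
    delta x z = delta x y := by
  refine le_antisymm (delta_le_trans le_rfl hyz.le) (le_of_not_gt fun hlt => ?_)
  have hmax : delta x y ≤ max (delta x z) (delta y z) :=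
    delta_le_trans (le_max_left _ _) ((delta_comm z y).trans_le (le_max_right _ _))
  exact hmax.not_gt (max_lt hlt hyz)

theorem delta_eq_iff_of_delta_lt {x y z : Vx d n} {i : ℕ} (hyz : delta y z < i) :
    delta x y = i ↔ delta x z = i := by
  constructor
  · rintro rfl
    exact delta_eq_of_delta_lt hyz
  · rintro rfl
    exact delta_eq_of_delta_lt ((delta_comm z y).trans_lt hyz)

theorem card_delta_le_eq_prod (x : Vx d n) {h : ℕ} (hhd : h ≤ d) :
    #{y | delta x y ≤ h} = ∏ j ∈ range h, n j := by
  have hball : ({y | delta x y ≤ h} : Finset (Vx d n)) =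
      Fintype.piFinset fun i : Fin d => if (i : ℕ) < h then univ else {x i} := by
    ext y
    simp only [mem_filter, mem_univ, true_and, delta_le_iff, Fintype.mem_piFinset]
    refine forall_congr' fun i => ?_
    by_cases hi : (i : ℕ) < h
    · simp [hi]
    · simp [hi, not_lt.1 hi, eq_comm]
  calc #{y | delta x y ≤ h}
      = ∏ i : Fin d, if (i : ℕ) < h then n i else 1 := by
        simp only [hball, Fintype.card_piFinset, apply_ite card, card_univ, Fintype.card_fin,
          card_singleton]
    _ = ∏ j ∈ range d with j < h, n j := by
        rw [Fin.prod_univ_eq_prod_range (fun j => if j < h then n j else 1), prod_filter]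
    _ = ∏ j ∈ range h, n j := by
        congr 1
        grind

theorem sum_range_succ_k (h : ℕ) (hn : ∀ j < h, n j ≠ 0) :
    ∑ j ∈ range (h + 1), k n j = ∏ j ∈ range h, n j := by
  induction h with
  | zero => simp [k]
  | succ h ih =>
    have hk : k n (h + 1) = (∏ j ∈ range h, n j) * (n h - 1) := by simp [k]
    rw [sum_range_succ, ih fun j hj => hn j (hj.trans h.lt_succ_self), hk, prod_range_succ,
      ← mul_one_add, Nat.add_sub_cancel' (Nat.one_le_iff_ne_zero.2 (hn h h.lt_succ_self))]

theorem card_delta_le_eq_sum_k (x : Vx d n) {h : ℕ} (hhd : h ≤ d) :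
    #{y | delta x y ≤ h} = ∑ j ∈ range (h + 1), k n j := by
  rw [card_delta_le_eq_prod x hhd,
    sum_range_succ_k h fun j hj => (x ⟨j, hj.trans_le hhd⟩).pos.ne']

theorem sum_A_eq_of_ite (h : ℕ) :
    ∑ j ∈ range (h + 1), A d n j = of fun x y => if delta x y ≤ h then 1 else 0 := by
  ext x y
  simp only [Matrix.sum_apply, A, of_apply, Finset.sum_ite_eq, mem_range, Nat.lt_succ_iff]

theorem sum_A_mul_self {h : ℕ} (hhd : h ≤ d) :
    (∑ j ∈ range (h + 1), A d n j) * ∑ j ∈ range (h + 1), A d n j =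
      (∑ j ∈ range (h + 1), (k n j : ℂ)) • ∑ j ∈ range (h + 1), A d n j := by
  rw [sum_A_eq_of_ite, ← Nat.cast_sum]
  exact of_ite_mul_self_of_equivalence (equivalence_delta_le h)
    fun x => card_delta_le_eq_sum_k x hhd

theorem Es_eq_diagonal (x₀ : Vx d n) (i : ℕ) :
    Es x₀ i = diagonal fun y => if delta x₀ y = i then 1 else 0 := by
  ext y z
  simp only [Es, of_apply, diagonal_apply, ite_and]

theorem isIdempotentElem_Es (x₀ : Vx d n) (i : ℕ) : IsIdempotentElem (Es x₀ i) := by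
  simp [IsIdempotentElem, Es_eq_diagonal]

theorem commute_Es_sum_A (x₀ : Vx d n) {i h : ℕ} (hi : h < i) :
    Commute (Es x₀ i) (∑ j ∈ range (h + 1), A d n j) := by
  rw [Commute, SemiconjBy, Es_eq_diagonal, sum_A_eq_of_ite]
  ext y z
  rw [diagonal_mul, mul_diagonal, of_apply]
  by_cases hyz : delta y z ≤ h
  · simp only [delta_eq_iff_of_delta_lt (x := x₀) (hyz.trans_lt hi), mul_comm]
  · simp only [hyz, if_false, mul_zero, zero_mul]

end WreathProduct

/-- for `1 ≤ i ≤ d` and `h ≤ i - 1`,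
`(Σ_{j=0}^h E_i* A_j E_i*)² = (Σ_{j=0}^h k j) (Σ_{j=0}^h E_i* A_j E_i*)`. -/
theorem stmt19 (d : ℕ) (hd : 1 ≤ d) (n : ℕ → ℕ) (hn : ∀ i < d, 2 ≤ n i)
    (x₀ : Vx d n) (i h : ℕ) (h1 : 1 ≤ i) (hi : i ≤ d) (hh : h ≤ i - 1) :
    (∑ j ∈ Finset.range (h + 1), Es x₀ i * A d n j * Es x₀ i) *
        (∑ j ∈ Finset.range (h + 1), Es x₀ i * A d n j * Es x₀ i)
      = (∑ j ∈ Finset.range (h + 1), (k n j : ℂ)) •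
          (∑ j ∈ Finset.range (h + 1), Es x₀ i * A d n j * Es x₀ i) := by
  have hi' : h < i := by omega
  simp only [← Matrix.mul_sum, ← Matrix.sum_mul]
  exact corner_mul_self (isIdempotentElem_Es x₀ i) (commute_Es_sum_A x₀ hi')
    (sum_A_mul_self (hi'.le.trans hi))
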